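/- Let M be a symmetric matrix with entries in {0,1,*}, indexed by a 3-element set D, such that M is impure (M contains at least one 0 entry and at least one 1 entry) and no principal 2×2 submatrix of M has exactly three entries equal to * (i.e., for no two distinct i,j ∈ D does the 2×2 submatrix M|_{{i,j}×{i,j}} contain exactly three *s). Then M has no derectangularising sequence. -/

import Mathlib

/-- The three possible entries `0`, `1`, `*` of a matrix-partition matrix. -/
inductive Entry : Type
  | zero | one | star
deriving DecidableEq

/-- `hrel M X Y` is the relation `H^M_{X,Y} = {(i,j) ∈ X × Y : M i j = *}`. -/
def hrel {D : Type} (M : D → D → Entry) (X Y : Set D) : Set (D × D) :=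
  {p | p.1 ∈ X ∧ p.2 ∈ Y ∧ M p.1 p.2 = Entry.star}

/-- Composition of relations: `R ∘ S = {(x,z) : ∃ y, (x,y) ∈ R ∧ (y,z) ∈ S}`. -/
def relComp {D : Type} (R S : Set (D × D)) : Set (D × D) :=
  {p | ∃ y, (p.1, y) ∈ R ∧ (y, p.2) ∈ S}

/-- A relation `R ⊆ A × B` is rectangular if `(i,i'),(i,j'),(j,i') ∈ R ⟹ (j,j') ∈ R`. -/
def Rectangular {A B : Type} (R : Set (A × B)) : Prop :=
  ∀ i j i' j', (i, i') ∈ R → (i, j') ∈ R → (j, i') ∈ R → (j, j') ∈ R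

/-- The submatrix `M|_{X×Y}` is pure if it contains no `0` or contains no `1`. -/
def IsPure {D : Type} (M : D → D → Entry) (X Y : Set D) : Prop :=
  (∀ i ∈ X, ∀ j ∈ Y, M i j ≠ Entry.zero) ∨ (∀ i ∈ X, ∀ j ∈ Y, M i j ≠ Entry.one)

/-- The composed relation `H^M_{D₁,D₂} ∘ H^M_{D₂,D₃} ∘ ⋯ ∘ H^M_{D_{k−1},D_k}`
of a sequence of subsets of `D`. -/
def relChain {D : Type} (M : D → D → Entry) : List (Set D) → Set (D × D)
  | [] => ∅
  | [X] => {p | p.1 = p.2 ∧ p.1 ∈ X}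
  | X :: Y :: rest => relComp (hrel M X Y) (relChain M (Y :: rest))

/-- `L = D₁, …, D_k` is a derectangularising sequence of `M`: `k ≥ 2`, every
`M|_{D_i × D_j}` is pure, and the composed relation is not rectangular. -/
def IsDerect {D : Type} (M : D → D → Entry) (L : List (Set D)) : Prop :=
  2 ≤ L.length ∧ (∀ X ∈ L, ∀ Y ∈ L, IsPure M X Y) ∧ ¬ Rectangular (relChain M L)

/-!
If the `*`-entries of `M` form a rectangular relation, two rows meeting a common column have their
`*`s in the same columns, and this property passes along a chain, so every chain is rectangular.
Otherwise the `*`s contain a path `j – i' – i – j'` with `M j j' ≠ *`. As `*`s are constant on the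
diagonal along such a path and `D` has at most three elements, either `M j j'` and `M j' j` are the
only entries other than `*`, contradicting impurity, or the `*`s are exactly the off-diagonal
entries. In the latter case the diagonal is constant on each set of a pure sequence, but not on
`D`, so each factor `H_{X,Y}` is a product set or relates elements one-to-one; such relations are
rectangular and closed under composition.
-/

section Rectangular

variable {D : Type} {M : D → D → Entry}

/-- The relation `H^M_{D,D}` of all positions of `*` in `M`, as a set of pairs so that
`Rectangular` applies to it. -/
def starRel (M : D → D → Entry) : Set (D × D) :=
  {p | M p.1 p.2 = Entry.star}

theorem star_of_mem_relChain (hsym : ∀ i j, M i j = M j i) (hM : Rectangular (starRel M))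
    {L : List (Set D)} {x x' z w : D} (hx : (x, z) ∈ relChain M L) (hx' : (x', z) ∈ relChain M L)
    (hw : M x w = Entry.star) : M x' w = Entry.star := by
  induction L using relChain.induct generalizing x x' w with
  | case1 => exact hx.elim
  | case2 X =>
    obtain rfl : x = x' := hx.1.trans hx'.1.symm
    exact hw
  | case3 X Y L ih =>
    obtain ⟨y, hxy, hyz⟩ := hx
    obtain ⟨y', hxy', hyz'⟩ := hx'
    have hy'x : M y' x = Entry.star := ih hyz hyz' ((hsym y x).trans hxy.2.2)
    exact hM x x' y' w ((hsym x y').trans hy'x) hw hxy'.2.2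

theorem mem_of_mem_relChain {X : Set D} {L : List (Set D)} {x z : D}
    (h : (x, z) ∈ relChain M (X :: L)) : x ∈ X := by
  cases L with
  | nil => exact h.2
  | cons Y L =>
    obtain ⟨y, hxy, -⟩ := h
    exact hxy.1

theorem rectangular_relChain (hsym : ∀ i j, M i j = M j i) (hM : Rectangular (starRel M))
    (L : List (Set D)) : Rectangular (relChain M L) := by
  intro i j i' j' hii' hij' hji'
  match L with
  | [] => exact hii'.elim
  | [X] =>
    obtain rfl : i = j := hii'.1.trans hji'.1.symm
    exact hij'
  | X :: Y :: L =>
    obtain ⟨y, hiy, hyj'⟩ := hij'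
    have hjy : M j y = Entry.star := star_of_mem_relChain hsym hM hii' hji' hiy.2.2
    exact ⟨y, ⟨mem_of_mem_relChain hji', hiy.2.1, hjy⟩, hyj'⟩

end Rectangular

section BiUniqueOrProd

/-- A relation that is a partial bijection or a product set `S × T`. Unlike rectangularity, this
property is preserved by composition. -/
def IsBiUniqueOrProd {A B : Type} (R : Set (A × B)) : Prop :=
  Relator.BiUnique (fun x y => (x, y) ∈ R) ∨ ∃ (S : Set A) (T : Set B), R = S ×ˢ T

theorem IsBiUniqueOrProd.rectangular {A B : Type} {R : Set (A × B)} (hR : IsBiUniqueOrProd R) :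
    Rectangular R := by
  intro i j i' j' hii' hij' hji'
  obtain ⟨hinj, -⟩ | ⟨S, T, rfl⟩ := hR
  · obtain rfl : i = j := hinj hii' hji'
    exact hij'
  · exact ⟨hji'.1, hij'.2⟩

variable {D : Type}

theorem prod_relComp (S T : Set D) (R : Set (D × D)) :
    relComp (S ×ˢ T) R = S ×ˢ {z | ∃ y ∈ T, (y, z) ∈ R} := by
  ext ⟨x, z⟩
  simp only [relComp, Set.mem_ofPred_eq, Set.mem_prod, and_assoc, exists_and_left]

theorem relComp_prod (R : Set (D × D)) (S T : Set D) :
    relComp R (S ×ˢ T) = {x | ∃ y ∈ S, (x, y) ∈ R} ×ˢ T := by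
  ext ⟨x, z⟩
  simp only [relComp, Set.mem_ofPred_eq, Set.mem_prod]
  tauto

theorem IsBiUniqueOrProd.relComp {R S : Set (D × D)} (hR : IsBiUniqueOrProd R)
    (hS : IsBiUniqueOrProd S) : IsBiUniqueOrProd (relComp R S) := by
  obtain ⟨hRl, hRr⟩ | ⟨A, B, rfl⟩ := hR
  · obtain ⟨hSl, hSr⟩ | ⟨A, B, rfl⟩ := hS
    · refine .inl ⟨?_, ?_⟩
      · rintro x x' z ⟨y, hxy, hyz⟩ ⟨y', hxy', hyz'⟩
        obtain rfl : y = y' := hSl hyz hyz'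
        exact hRl hxy hxy'
      · rintro x z z' ⟨y, hxy, hyz⟩ ⟨y', hxy', hyz'⟩
        obtain rfl : y = y' := hRr hxy hxy'
        exact hSr hyz hyz'
    · exact .inr ⟨_, _, relComp_prod R A B⟩
  · exact .inr ⟨_, _, prod_relComp A B S⟩

theorem isBiUniqueOrProd_relChain {M : D → D → Entry} {L : List (Set D)}
    (h : ∀ X ∈ L, ∀ Y ∈ L, IsBiUniqueOrProd (hrel M X Y)) :
    IsBiUniqueOrProd (relChain M L) := by
  induction L using relChain.induct with
  | case1 => exact .inr ⟨∅, ∅, Set.empty_prod.symm⟩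
  | case2 X =>
    exact .inl ⟨fun _ _ _ hx hx' => hx.1.trans hx'.1.symm,
      fun _ _ _ hy hy' => hy.1.symm.trans hy'.1⟩
  | case3 X Y L ih =>
    have hXY : IsBiUniqueOrProd (hrel M X Y) := h X (by simp) Y (by simp)
    exact hXY.relComp
      (ih fun X' hX' Y' hY' => h X' (List.mem_cons_of_mem X hX') Y' (List.mem_cons_of_mem X hY'))

end BiUniqueOrProd

section OffDiagonal

variable {D : Type} {M : D → D → Entry} {X Y : Set D}

theorem IsPure.diag_eq (hX : IsPure M X X) {x y : D} (hx : x ∈ X) (hy : y ∈ X)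
    (hxx : M x x ≠ Entry.star) (hyy : M y y ≠ Entry.star) : M x x = M y y := by
  obtain h | h := hX
  · have hx0 : M x x ≠ Entry.zero := h x hx x hx
    have hy0 : M y y ≠ Entry.zero := h y hy y hy
    cases hMx : M x x <;> cases hMy : M y y <;> grind
  · have hx1 : M x x ≠ Entry.one := h x hx x hx
    have hy1 : M y y ≠ Entry.one := h y hy y hy
    cases hMx : M x x <;> cases hMy : M y y <;> grind

theorem isBiUniqueOrProd_hrel (hstar : ∀ x y, M x y = Entry.star ↔ x ≠ y)
    (hdiag : ∀ x y z, M x x = M y y → M x x = M z z → x = y ∨ x = z ∨ y = z)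
    (hX : IsPure M X X) (hY : IsPure M Y Y) : IsBiUniqueOrProd (hrel M X Y) := by
  have hne_star (x : D) : M x x ≠ Entry.star := by simp [hstar]
  have hXdiag {x x' : D} (hx : x ∈ X) (hx' : x' ∈ X) : M x x = M x' x' :=
    hX.diag_eq hx hx' (hne_star x) (hne_star x')
  have hYdiag {y y' : D} (hy : y ∈ Y) (hy' : y' ∈ Y) : M y y = M y' y' :=
    hY.diag_eq hy hy' (hne_star y) (hne_star y')
  by_cases hXY : ∃ p ∈ X, ∃ q ∈ Y, M p p = M q q
  · obtain ⟨p, hp, q, hq, hpq⟩ := hXY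
    have hXYdiag {x y : D} (hx : x ∈ X) (hy : y ∈ Y) : M x x = M y y :=
      (hXdiag hx hp).trans (hpq.trans (hYdiag hq hy))
    refine .inl ⟨?_, ?_⟩
    · rintro x x' y ⟨hx, hy, hxy⟩ ⟨hx', -, hx'y⟩
      have := hdiag x x' y (hXdiag hx hx') (hXYdiag hx hy)
      have hxy : x ≠ y := (hstar x y).1 hxy
      have hx'y : x' ≠ y := (hstar x' y).1 hx'y
      tauto
    · rintro x y y' ⟨hx, hy, hxy⟩ ⟨-, hy', hxy'⟩
      have := hdiag x y y' (hXYdiag hx hy) (hXYdiag hx hy')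
      have hxy : x ≠ y := (hstar x y).1 hxy
      have hxy' : x ≠ y' := (hstar x y').1 hxy'
      tauto
  · refine .inr ⟨X, Y, Set.ext fun ⟨x, y⟩ => ⟨fun h => ⟨h.1, h.2.1⟩, fun ⟨hx, hy⟩ => ?_⟩⟩
    have hxy : x ≠ y := by
      rintro rfl
      exact hXY ⟨x, hx, x, hy, rfl⟩
    exact ⟨hx, hy, (hstar x y).2 hxy⟩

end OffDiagonal

theorem eq_or_eq_or_eq_of_card_le_three {α : Type*} [Fintype α] (hα : Fintype.card α ≤ 3)
    {p q r : α} (hpq : p ≠ q) (hpr : p ≠ r) (hqr : q ≠ r) (x : α) : x = p ∨ x = q ∨ x = r := by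
  classical
  have huniv : ({p, q, r} : Finset α) = Finset.univ :=
    Finset.eq_of_subset_of_card_le (Finset.subset_univ _)
      (by rwa [Finset.card_eq_three.2 ⟨p, q, r, hpq, hpr, hqr, rfl⟩])
  simpa [← huniv] using Finset.mem_univ x

theorem eq_or_eq_or_eq_of_apply_eq {α β : Type*} [Fintype α] (hα : Fintype.card α ≤ 3)
    {f : α → β} {a b : α} (hab : f a ≠ f b) {x y z : α} (hxy : f x = f y) (hxz : f x = f z) :
    x = y ∨ x = z ∨ y = z := by
  by_contra! ⟨hxy_ne, hxz_ne, hyz_ne⟩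
  have hconst (w : α) : f w = f x := by
    obtain rfl | rfl | rfl := eq_or_eq_or_eq_of_card_le_three hα hxy_ne hxz_ne hyz_ne w
    exacts [rfl, hxy.symm, hxz.symm]
  exact hab ((hconst a).trans (hconst b).symm)

section CardLeThree

variable {D : Type} {M : D → D → Entry}

theorem diag_eq_star_iff {i j : D} (hij : M i j = Entry.star) (hji : M j i = Entry.star)
    (hno : i ≠ j → [M i i, M i j, M j i, M j j].count Entry.star ≠ 3) :
    M i i = Entry.star ↔ M j j = Entry.star := by
  obtain rfl | hne := eq_or_ne i j
  · rfl
  · have hcount := hno hne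
    rw [hij, hji] at hcount
    cases hi : M i i <;> cases hj : M j j <;> simp_all

variable [Fintype D]

theorem exists_star_star_of_path (hD : Fintype.card D ≤ 3) (hsym : ∀ i j, M i j = M j i)
    {i j i' j' : D} (hii' : M i i' = Entry.star) (hij' : M i j' = Entry.star)
    (hji' : M j i' = Entry.star) (hjj' : M j j' ≠ Entry.star) (hne : j ≠ j') :
    ∃ k, k ≠ j ∧ k ≠ j' ∧ M k j = Entry.star ∧ M k j' = Entry.star := by
  have hij_ne : i ≠ j := by
    rintro rfl
    exact hjj' hij'
  have hi'j'_ne : i' ≠ j' := by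
    rintro rfl
    exact hjj' hji'
  obtain rfl | hij'_ne := eq_or_ne i j'
  · have hi'j_ne : i' ≠ j := by
      rintro rfl
      exact hjj' ((hsym i' i).trans hii')
    exact ⟨i', hi'j_ne, hi'j'_ne, (hsym i' j).trans hji', (hsym i' i).trans hii'⟩
  · have hij : M i j = Entry.star := by
      obtain rfl | rfl | rfl :=
        eq_or_eq_or_eq_of_card_le_three hD hij_ne hij'_ne hne i'
      · exact (hsym i' j).trans hji'
      · exact hii'
      · exact absurd rfl hi'j'_ne
    exact ⟨i, hij_ne, hij'_ne, hij, hij'⟩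

theorem eq_of_ne_star_of_diag_eq_star (hD : Fintype.card D ≤ 3) (hsym : ∀ i j, M i j = M j i)
    (hdiag : ∀ i j, M i j = Entry.star → (M i i = Entry.star ↔ M j j = Entry.star))
    {i j i' j' : D} (hii' : M i i' = Entry.star) (hij' : M i j' = Entry.star)
    (hji' : M j i' = Entry.star) (hjj' : M j j' ≠ Entry.star) (hii : M i i = Entry.star)
    {x y : D} (hxy : M x y ≠ Entry.star) : M x y = M j j' := by
  have hi' : M i' i' = Entry.star := (hdiag i i' hii').1 hii
  have hj : M j j = Entry.star := (hdiag j i' hji').2 hi'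
  have hj' : M j' j' = Entry.star := (hdiag i j' hij').1 hii
  have hne : j ≠ j' := by
    rintro rfl
    exact hjj' hj
  obtain ⟨k, hkj_ne, hkj'_ne, hkj, hkj'⟩ :=
    exists_star_star_of_path hD hsym hii' hij' hji' hjj' hne
  have hkk : M k k = Entry.star := (hdiag k j hkj).2 hj
  have hmem := eq_or_eq_or_eq_of_card_le_three hD hkj_ne hkj'_ne hne
  obtain rfl | rfl | rfl := hmem x <;> obtain rfl | rfl | rfl := hmem y <;> grind

theorem star_iff_ne_of_diag_ne_star (hD : Fintype.card D ≤ 3) (hsym : ∀ i j, M i j = M j i)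
    (hdiag : ∀ i j, M i j = Entry.star → (M i i = Entry.star ↔ M j j = Entry.star))
    {i j i' j' : D} (hii' : M i i' = Entry.star) (hij' : M i j' = Entry.star)
    (hji' : M j i' = Entry.star) (hjj' : M j j' ≠ Entry.star) (hii : M i i ≠ Entry.star)
    (x y : D) : M x y = Entry.star ↔ x ≠ y := by
  have hi' : M i' i' ≠ Entry.star := mt (hdiag i i' hii').2 hii
  have hj : M j j ≠ Entry.star := mt (hdiag j i' hji').1 hi'
  have hij_ne : i ≠ j := by
    rintro rfl
    exact hjj' hij'
  have hii'_ne : i ≠ i' := by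
    rintro rfl
    exact hii hii'
  have hji'_ne : j ≠ i' := by
    rintro rfl
    exact hj hji'
  have hmem := eq_or_eq_or_eq_of_card_le_three hD hij_ne hii'_ne hji'_ne
  obtain rfl : j' = j := by
    obtain rfl | rfl | rfl := hmem j'
    · exact absurd hij' hii
    · rfl
    · exact absurd hji' hjj'
  obtain rfl | rfl | rfl := hmem x <;> obtain rfl | rfl | rfl := hmem y <;> grind

theorem star_iff_ne_of_not_rectangular (hD : Fintype.card D ≤ 3) (hsym : ∀ i j, M i j = M j i)
    (h0 : ∃ i j, M i j = Entry.zero) (h1 : ∃ i j, M i j = Entry.one)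
    (hdiag : ∀ i j, M i j = Entry.star → (M i i = Entry.star ↔ M j j = Entry.star))
    (hM : ¬ Rectangular (starRel M)) (x y : D) : M x y = Entry.star ↔ x ≠ y := by
  simp only [Rectangular, starRel, Set.mem_ofPred_eq, not_forall] at hM
  obtain ⟨i, j, i', j', hii', hij', hji', hjj'⟩ := hM
  refine star_iff_ne_of_diag_ne_star hD hsym hdiag hii' hij' hji' hjj' (fun hii => ?_) x y
  obtain ⟨a, a', ha⟩ := h0
  obtain ⟨b, b', hb⟩ := h1
  have ha' : M a a' = M j j' :=
    eq_of_ne_star_of_diag_eq_star hD hsym hdiag hii' hij' hji' hjj' hii (by simp [ha])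
  have hb' : M b b' = M j j' :=
    eq_of_ne_star_of_diag_eq_star hD hsym hdiag hii' hij' hji' hjj' hii (by simp [hb])
  exact absurd (ha.symm.trans (ha'.trans (hb'.symm.trans hb))) (by decide)

end CardLeThree

theorem stmt4_general {D : Type} [Fintype D] (hD : Fintype.card D ≤ 3)
    (M : D → D → Entry) (hsym : ∀ i j, M i j = M j i)
    (h0 : ∃ i j, M i j = Entry.zero) (h1 : ∃ i j, M i j = Entry.one)
    (hno : ∀ i j : D, i ≠ j →
      ([M i i, M i j, M j i, M j j].count Entry.star) ≠ 3) :
    ¬ ∃ L : List (Set D), IsDerect M L := by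
  rintro ⟨L, -, hpure, hL⟩
  have hstar : ∀ x y, M x y = Entry.star ↔ x ≠ y :=
    star_iff_ne_of_not_rectangular hD hsym h0 h1
      (fun i j hij => diag_eq_star_iff hij ((hsym j i).trans hij) (hno i j))
      (fun hM => hL (rectangular_relChain hsym hM L))
  have eq_of_ne_star {i j : D} (hij : M i j ≠ Entry.star) : i = j := by
    simpa only [ne_eq, hstar, not_not] using hij
  obtain ⟨a, a', ha⟩ := h0
  obtain ⟨b, b', hb⟩ := h1
  obtain rfl : a = a' := eq_of_ne_star (by simp [ha])
  obtain rfl : b = b' := eq_of_ne_star (by simp [hb])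
  have hab : M a a ≠ M b b := by simp [ha, hb]
  have hdiag (x y z : D) : M x x = M y y → M x x = M z z → x = y ∨ x = z ∨ y = z :=
    eq_or_eq_or_eq_of_apply_eq (f := fun w => M w w) hD hab
  exact hL (isBiUniqueOrProd_relChain fun X hX Y hY =>
    isBiUniqueOrProd_hrel hstar hdiag (hpure X hX X hX) (hpure Y hY Y hY)).rectangular

/-- An impure symmetric `{0,1,*}`-matrix on a 3-element index set with no principal
`2×2` submatrix containing exactly three `*`s has no derectangularising sequence. -/
theorem stmt4 {D : Type} [Fintype D] (hD : Fintype.card D = 3)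
    (M : D → D → Entry) (hsym : ∀ i j, M i j = M j i)
    (h0 : ∃ i j, M i j = Entry.zero) (h1 : ∃ i j, M i j = Entry.one)
    (hno : ∀ i j : D, i ≠ j →
      ([M i i, M i j, M j i, M j j].count Entry.star) ≠ 3) :
    ¬ ∃ L : List (Set D), IsDerect M L :=
  stmt4_general hD.le M hsym h0 h1 hno
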